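/- Let π ∈ S_n be a 312-avoiding permutation and set λ_i = max{π_1, …, π_i} for i ∈ [n]. Then for every σ ∈ S_n, σ ≤_B π in the Bruhat order if and only if σ_i ≤ λ_i for all i ∈ [n]; that is, the lower Bruhat interval [id, π]_B is exactly the set of complete rook placements on the Ferrers board λ. -/

import Mathlib

/-- A permutation `σ` avoids the pattern `312` if there are no indices `i < j < k`
with `σ j < σ k < σ i`. -/
def Avoids312 {n : ℕ} (σ : Equiv.Perm (Fin n)) : Prop :=
  ¬ ∃ i j k : Fin n, i < j ∧ j < k ∧ σ j < σ k ∧ σ k < σ i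

/-- `runningMax σ i = max {σ_1, …, σ_i}`, where the values of `σ` are taken as
1-based positive integers. -/
def runningMax {n : ℕ} (σ : Equiv.Perm (Fin n)) (i : Fin n) : ℕ :=
  (Finset.Iic i).sup fun j => (σ j : ℕ) + 1

/-- The number of inversions of a permutation: pairs of positions `i < j`
with `σ i > σ j`. -/
def invCount {n : ℕ} (σ : Equiv.Perm (Fin n)) : ℕ :=
  (Finset.univ.filter fun p : Fin n × Fin n => p.1 < p.2 ∧ σ p.2 < σ p.1).card

/-- One step in the Bruhat order: `τ` is obtained from `σ` by swapping two (not
necessarily adjacent) entries in one-line notation, strictly increasing the number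
of inversions. -/
def BruhatStep {n : ℕ} (σ τ : Equiv.Perm (Fin n)) : Prop :=
  (∃ i j : Fin n, i ≠ j ∧ τ = σ * Equiv.swap i j) ∧ invCount σ < invCount τ

/-- The Bruhat order: `σ ≤_B π` iff there is a chain from `σ` to `π` of swaps, each
strictly increasing the number of inversions. -/
def BruhatLE {n : ℕ} (σ π : Equiv.Perm (Fin n)) : Prop :=
  Relation.ReflTransGen BruhatStep σ π


theorem invCount_lt_swap {n : ℕ} (σ : Equiv.Perm (Fin n)) {i j : Fin n} (hij : i < j)
    (h : σ i < σ j) : invCount σ < invCount (σ * Equiv.swap i j) := by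
  classical
  unfold invCount
  set s := Equiv.swap i j with hs
  have hss : ∀ a, s (s a) = a := fun a => Equiv.swap_apply_self i j a
  have hsi : s i = j := Equiv.swap_apply_left i j
  have hsj : s j = i := Equiv.swap_apply_right i j
  have hsn : ∀ a, a ≠ i → a ≠ j → s a = a := fun a h1 h2 => Equiv.swap_apply_of_ne_of_ne h1 h2
  have hmem : (i, j) ∈ (Finset.univ.filter fun p : Fin n × Fin n =>
      p.1 < p.2 ∧ (σ * s) p.2 < (σ * s) p.1) := by
    refine Finset.mem_filter.2 ⟨Finset.mem_univ _, hij, ?_⟩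
    change σ (s j) < σ (s i)
    rw [hsi, hsj]; exact h
  rw [← Finset.card_erase_add_one hmem, Nat.lt_succ_iff]
  apply Finset.card_le_card_of_injOn
    (fun p : Fin n × Fin n => if s p.1 < s p.2 then (s p.1, s p.2) else p)
  · rintro ⟨a, b⟩ hab
    obtain ⟨hab, hv⟩ : a < b ∧ σ b < σ a := (Finset.mem_filter.1 hab).2
    rw [Finset.mem_coe, Finset.mem_erase, Finset.mem_filter]
    refine (?_ : ∀ q : Fin n × Fin n, (q.1 < q.2 ∧ σ (s q.2) < σ (s q.1)) ∧ ¬ q = (i, j) →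
      q ≠ (i, j) ∧ q ∈ Finset.univ ∧ q.1 < q.2 ∧ (σ * s) q.2 < (σ * s) q.1) _ ?_
    · exact fun q hq => ⟨hq.2, Finset.mem_univ _, hq.1⟩
    dsimp only
    split_ifs with hc
    · refine ⟨⟨hc, by simpa [hss] using hv⟩, ?_⟩
      intro he
      have h1 : s a = i := congrArg Prod.fst he
      have h2 : s b = j := congrArg Prod.snd he
      have h3 := hss a
      have h4 := hss b
      rw [h1, hsi] at h3
      rw [h2, hsj] at h4
      subst h3 h4
      exact absurd hab (not_lt.2 hij.le)
    · refine ⟨⟨hab, ?_⟩, ?_⟩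
      · change σ (s b) < σ (s a)
        by_cases ha : a = i
        · subst ha
          by_cases hb : b = j
          · subst hb; rw [hsi, hsj]; exact h
          · have := hsn b hab.ne' hb
            rw [hsi, this]; exact hv.trans h
        · by_cases hb : b = j
          · subst hb
            have := hsn a ha hab.ne
            rw [hsj, this]; exact h.trans hv
          · exfalso
            by_cases ha' : a = j
            · subst ha'
              have hb' : b ≠ i := (hij.trans hab).ne'
              rw [hsj, hsn b hb' hb] at hc
              exact hc (hij.trans hab)
            · rw [hsn a ha ha'] at hc
              by_cases hb' : b = i
              · subst hb'
                rw [hsi] at hc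
                exact hc (hab.trans hij)
              · rw [hsn b hb' hb] at hc
                exact hc hab
      · intro he
        have h1 : a = i := congrArg Prod.fst he
        have h2 : b = j := congrArg Prod.snd he
        subst h1 h2
        exact absurd hv (not_lt.2 h.le)
  · rintro ⟨a, b⟩ hab ⟨c, d⟩ hcd he
    replace hab := (Finset.mem_filter.1 hab).2
    replace hcd := (Finset.mem_filter.1 hcd).2
    dsimp only at he
    split_ifs at he with h1 h2 h2
    · simpa using he
    · have e1 : s a = c := congrArg Prod.fst he
      have e2 : s b = d := congrArg Prod.snd he
      rw [← e1, ← e2, hss, hss] at h2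
      exact absurd hab.1 h2
    · have e1 : a = s c := congrArg Prod.fst he
      have e2 : b = s d := congrArg Prod.snd he
      rw [e1, e2, hss, hss] at h1
      exact absurd hcd.1 h1
    · exact he

theorem le_runningMax {n : ℕ} (σ : Equiv.Perm (Fin n)) {m i : Fin n} (h : m ≤ i) :
    (σ m : ℕ) + 1 ≤ runningMax σ i :=
  Finset.le_sup (f := fun j => (σ j : ℕ) + 1) (Finset.mem_Iic.2 h)

theorem runningMax_mono {n : ℕ} (σ : Equiv.Perm (Fin n)) {m i : Fin n} (h : m ≤ i) :
    runningMax σ m ≤ runningMax σ i :=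
  Finset.sup_mono (Finset.Iic_subset_Iic.2 h)

theorem le_runningMax_iff {n : ℕ} (σ : Equiv.Perm (Fin n)) {i : Fin n} {v : ℕ} :
    v + 1 ≤ runningMax σ i ↔ ∃ m ≤ i, v ≤ σ m := by
  unfold runningMax
  rw [Nat.succ_le_iff, Finset.lt_sup_iff]
  simp

theorem BruhatStep.exists_lt {n : ℕ} {σ τ : Equiv.Perm (Fin n)} (h : BruhatStep σ τ) :
    ∃ i j : Fin n, i < j ∧ σ i < σ j ∧ τ = σ * Equiv.swap i j := by
  have key : ∀ i j : Fin n, i < j → τ = σ * Equiv.swap i j → σ i < σ j := by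
    intro i j hij he
    by_contra hc
    have hlt : σ j < σ i := lt_of_le_of_ne (not_lt.1 hc) (fun e => hij.ne' (σ.injective e))
    have h1 := invCount_lt_swap τ hij (by rw [he]; simpa using hlt)
    rw [he, mul_assoc, Equiv.swap_mul_self, mul_one, ← he] at h1
    exact absurd h.2 (not_lt.2 h1.le)
  obtain ⟨⟨i, j, hne, he⟩, -⟩ := h
  rcases lt_or_gt_of_ne hne with hij | hij
  · exact ⟨i, j, hij, key i j hij he, he⟩
  · rw [Equiv.swap_comm] at he
    exact ⟨j, i, hij, key j i hij he, he⟩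

theorem BruhatStep.runningMax_le {n : ℕ} {σ τ : Equiv.Perm (Fin n)} (h : BruhatStep σ τ)
    (k : Fin n) : runningMax σ k ≤ runningMax τ k := by
  obtain ⟨i, j, hij, hv, rfl⟩ := h.exists_lt
  apply Finset.sup_le
  intro m hm
  have hm := Finset.mem_Iic.1 hm
  rw [le_runningMax_iff]
  by_cases hi : m = i
  · subst hi
    exact ⟨m, hm, by simpa using hv.le⟩
  · by_cases hj : m = j
    · subst hj
      exact ⟨i, hij.le.trans hm, by simp⟩
    · exact ⟨m, hm, by simp [Equiv.swap_apply_of_ne_of_ne hi hj]⟩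

theorem invCount_le {n : ℕ} (σ : Equiv.Perm (Fin n)) : invCount σ ≤ n * n := by
  unfold invCount
  refine (Finset.card_le_univ _).trans ?_
  simp

/-- Two maximal placements on the same board coincide. -/
theorem eq_of_maximal {n : ℕ} (lam : Fin n → ℕ) (σ π : Equiv.Perm (Fin n))
    (hσ : ∀ i, (σ i : ℕ) + 1 ≤ lam i) (hπ : ∀ i, (π i : ℕ) + 1 ≤ lam i)
    (mσ : ∀ i j, i < j → σ i < σ j → lam i < (σ j : ℕ) + 1)
    (mπ : ∀ i j, i < j → π i < π j → lam i < (π j : ℕ) + 1) : σ = π := by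
  have aux : ∀ (σ π : Equiv.Perm (Fin n)), (∀ i, (π i : ℕ) + 1 ≤ lam i) →
      (∀ i j, i < j → σ i < σ j → lam i < (σ j : ℕ) + 1) →
      ∀ i, (∀ j < i, σ j = π j) → ¬ σ i < π i := by
    intro σ π hπ mσ i ih hlt
    obtain ⟨j, hj⟩ := σ.surjective (π i)
    rcases lt_trichotomy j i with h | h | h
    · exact h.ne (π.injective ((ih j h).symm.trans hj))
    · subst h; exact hlt.ne hj
    · have := mσ i j h (hj ▸ hlt)
      rw [hj] at this
      exact absurd (hπ i) (not_le.2 this)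
  ext1 i
  induction i using WellFoundedLT.induction with
  | ind i ih =>
    exact le_antisymm (not_lt.1 (aux π σ hσ mπ i fun j hj => (ih j hj).symm))
      (not_lt.1 (aux σ π hπ mσ i ih))

theorem bruhatLE_of_rook {n : ℕ} (π : Equiv.Perm (Fin n)) (hπ : Avoids312 π) (k : ℕ) :
    ∀ σ : Equiv.Perm (Fin n), n * n - invCount σ = k →
      (∀ i : Fin n, (σ i : ℕ) + 1 ≤ runningMax π i) → BruhatLE σ π := by
  induction k using Nat.strong_induction_on with
  | _ k ih =>
  intro σ hk hσ
  by_cases hm : ∀ i j, i < j → σ i < σ j → runningMax π i < (σ j : ℕ) + 1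
  · have : σ = π := by
      refine eq_of_maximal (runningMax π) σ π hσ (fun i => le_runningMax π le_rfl) hm ?_
      intro i j hij hv
      by_contra hc
      obtain ⟨m, hmi, hmv⟩ := (le_runningMax_iff π).1 (not_lt.1 hc)
      have hmv : π j ≤ π m := hmv
      have h1 : m < i := lt_of_le_of_ne hmi (by rintro rfl; exact absurd hv (not_lt.2 hmv))
      have h2 : π j < π m := lt_of_le_of_ne hmv
        (fun e => (h1.trans hij).ne' (π.injective e))
      exact hπ ⟨m, i, j, h1, hij, hv, h2⟩
    rw [this]
    exact Relation.ReflTransGen.refl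
  · push Not at hm
    obtain ⟨i, j, hij, hv, hle⟩ := hm
    have hinv := invCount_lt_swap σ hij hv
    have hb := invCount_le (σ * Equiv.swap i j)
    refine Relation.ReflTransGen.head (b := σ * Equiv.swap i j) ⟨⟨i, j, hij.ne, rfl⟩, hinv⟩ ?_
    refine ih _ (by omega) _ rfl ?_
    intro m
    by_cases hi : m = i
    · subst hi; simpa using hle
    · by_cases hj : m = j
      · subst hj
        simpa using (hσ i).trans (runningMax_mono π hij.le)
      · simpa [Equiv.swap_apply_of_ne_of_ne hi hj] using hσ m

/-- For a 312-avoiding permutation `π` with `λ_i = max {π_1, …, π_i}`, a permutation `σ`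
satisfies `σ ≤_B π` in the Bruhat order if and only if `σ_i ≤ λ_i` for all `i`; i.e. the
lower Bruhat interval `[id, π]_B` is exactly the set of complete rook placements on `λ`. -/
theorem bruhatLE_iff_complete_rook (n : ℕ) (π : Equiv.Perm (Fin n)) (hπ : Avoids312 π)
    (σ : Equiv.Perm (Fin n)) :
    BruhatLE σ π ↔ ∀ i : Fin n, (σ i : ℕ) + 1 ≤ runningMax π i := by
  constructor
  · intro h i
    have hmax : runningMax σ i ≤ runningMax π i := by
      unfold BruhatLE at h
      clear hπ
      induction h with
      | refl => exact le_rfl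
      | tail _ hs ih => exact ih.trans (hs.runningMax_le i)
    exact (le_runningMax σ le_rfl).trans hmax
  · exact bruhatLE_of_rook π hπ _ σ rfl
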